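/- arXiv:math/0703385 — 3 statements merged into one kernel-verified Lean document; each statement's English description precedes it below -/
import Mathlib

section
/- For each k ∈ ℕ with k ≥ 1, define Γ_k = { (1/3^k) · Σ_{j=k−1}^{p} a_j 4^j : p ∈ ℕ, p ≥ k−1, each a_j ∈ {0,1} } ∪ {0}. Then for every pair of distinct elements γ, γ' ∈ Γ_k, the difference γ − γ' lies in 𝒪 = {4^{n−1}(2m+1)/3ⁿ : n ∈ ℕ₀, m ∈ ℤ}; hence {e_γ : γ ∈ Γ_k} is a mutually orthogonal family of exponentials with respect to ν_{3/4}. -/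
/-!
Pulling out the factor `4^(k-1)/3^k`, an element of `Γ_k` is a natural number whose base-4 digits
are all `0` or `1`. If two such numbers differ and `l` is the lowest position where their digits
differ, their difference is `4^l` times (`±1` plus a multiple of `4`), hence `4^l * odd`
(`ZeroOneDigits.exists_sub_eq`). So `γ - γ' = 4^(k-1+l) * odd / 3^k`; multiplying the odd factor by
`3^l` brings this to the form required in `𝒪` with `n = k + l`.

For the orthogonality, invariance gives `ν̂(t) = cos(2πt) ν̂(3t/4)` for the Fourier transform
(`fourier_functional_equation`). Starting from `t = (1/4)(4/3)^n(2m+1)` and applying this `n` times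
leads to the point `(2m+1)/4`, where the cosine vanishes; hence `ν̂ = 0` on `𝒪`.
-/

open MeasureTheory
open scoped ENNReal

/-- The set `𝒪 = {4^{n−1}(2m+1)/3ⁿ : n ∈ ℕ₀, m ∈ ℤ} = {(1/4)(4/3)ⁿ(2m+1) : n ∈ ℕ₀, m ∈ ℤ}`. -/
def OsetThreeFourths : Set ℝ :=
  {x : ℝ | ∃ (n : ℕ) (m : ℤ), x = (1 / 4) * (4 / 3 : ℝ) ^ n * (2 * (m : ℝ) + 1)}

/-- The set `Γ_k = {(1/3^k) Σ_{j=k−1}^{p} a_j 4^j : p finite, a_j ∈ {0,1}} ∪ {0}`. -/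
def GamSet (k : ℕ) : Set ℝ :=
  {x : ℝ | ∃ p : ℕ, k - 1 ≤ p ∧ ∃ a : ℕ → ℕ, (∀ j, a j = 0 ∨ a j = 1) ∧
    x = (1 / (3 : ℝ) ^ k) * ∑ j ∈ Finset.Icc (k - 1) p, (a j : ℝ) * (4 : ℝ) ^ j} ∪ {0}

/-- Natural numbers all of whose base-4 digits are `0` or `1`; the constructor `step` prepends a
lowest digit `a`. -/
inductive ZeroOneDigits : ℕ → Prop
  | zero : ZeroOneDigits 0
  | step (a N : ℕ) (ha : a = 0 ∨ a = 1) (hN : ZeroOneDigits N) : ZeroOneDigits (a + 4 * N)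

lemma ZeroOneDigits.sum_range (p : ℕ) (a : ℕ → ℕ) (ha : ∀ j, a j = 0 ∨ a j = 1) :
    ZeroOneDigits (∑ j ∈ Finset.range p, a j * 4 ^ j) := by
  induction p generalizing a with
  | zero => simpa using ZeroOneDigits.zero
  | succ p ih =>
    have h := ZeroOneDigits.step (a 0) _ (ha 0) (ih (fun j => a (j + 1)) (fun j => ha (j + 1)))
    convert h using 1
    rw [Finset.sum_range_succ', Finset.mul_sum, add_comm]
    congr 1
    · simp
    · exact Finset.sum_congr rfl fun j _ => by ring

lemma ZeroOneDigits.mod_div {N : ℕ} (h : ZeroOneDigits N) :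
    (N % 4 = 0 ∨ N % 4 = 1) ∧ ZeroOneDigits (N / 4) := by
  cases h with
  | zero => exact ⟨Or.inl rfl, ZeroOneDigits.zero⟩
  | step a N ha hN =>
    have h4 : (a + 4 * N) / 4 = N := by omega
    rw [h4]
    exact ⟨by omega, hN⟩

lemma ZeroOneDigits.exists_sub_eq {N M : ℕ} (hN : ZeroOneDigits N) (hM : ZeroOneDigits M)
    (hne : N ≠ M) : ∃ (l : ℕ) (c : ℤ), (N : ℤ) - M = 4 ^ l * (2 * c + 1) := by
  induction hN generalizing M with
  | zero =>
    -- Here the lowest differing digit is the lowest nonzero digit of `M`.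
    induction hM with
    | zero => exact absurd rfl hne
    | step b M hb hM ih =>
      rcases hb with rfl | rfl
      · obtain ⟨l, c, h⟩ := ih (by omega)
        refine ⟨l + 1, c, ?_⟩
        rw [pow_succ]
        push_cast at h ⊢
        linear_combination 4 * h
      · exact ⟨0, -1 - 2 * M, by push_cast; ring⟩
  | step a N ha hN ih =>
    obtain ⟨hb, hM'⟩ := hM.mod_div
    by_cases hab : a = M % 4
    · obtain ⟨l, c, h⟩ := ih hM' (by omega)
      refine ⟨l + 1, c, ?_⟩
      have hdiff : ((a + 4 * N : ℕ) : ℤ) - M = 4 * ((N : ℤ) - (M / 4 : ℕ)) := by omega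
      rw [hdiff, h]
      ring
    · refine ⟨0, (((a + 4 * N : ℕ) : ℤ) - M) / 2, ?_⟩
      omega

lemma exists_of_mem_gamSet {k : ℕ} {x : ℝ} (hx : x ∈ GamSet k) :
    ∃ N : ℕ, ZeroOneDigits N ∧ x = 4 ^ (k - 1) / 3 ^ k * (N : ℝ) := by
  rcases hx with ⟨p, hp, a, ha, rfl⟩ | hx
  · refine ⟨_, ZeroOneDigits.sum_range (p + 1 - (k - 1)) (fun j => a (k - 1 + j))
      (fun j => ha _), ?_⟩
    have hIcc : Finset.Icc (k - 1) p = Finset.Ico (k - 1) (p + 1) := by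
      ext j
      simp only [Finset.mem_Icc, Finset.mem_Ico]
      omega
    rw [hIcc, Finset.sum_Ico_eq_sum_range]
    push_cast
    rw [Finset.mul_sum, Finset.mul_sum]
    refine Finset.sum_congr rfl fun j _ => ?_
    rw [pow_add]
    ring
  · refine ⟨0, ZeroOneDigits.zero, ?_⟩
    rw [Set.mem_singleton_iff] at hx
    simp [hx]

lemma gamSet_sub_mem {k : ℕ} (hk : 1 ≤ k) {γ γ' : ℝ} (hγ : γ ∈ GamSet k) (hγ' : γ' ∈ GamSet k)
    (hne : γ ≠ γ') : γ - γ' ∈ OsetThreeFourths := by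
  obtain ⟨N, hN, rfl⟩ := exists_of_mem_gamSet hγ
  obtain ⟨M, hM, rfl⟩ := exists_of_mem_gamSet hγ'
  obtain ⟨l, c, h⟩ := hN.exists_sub_eq hM (by rintro rfl; exact hne rfl)
  have hR : (N : ℝ) - M = 4 ^ l * (2 * c + 1) := by exact_mod_cast h
  have hodd : Odd ((2 * c + 1) * 3 ^ l) :=
    (odd_two_mul_add_one c).mul (Odd.pow (by decide))
  obtain ⟨m, hm⟩ := hodd
  have hmR : (2 * (c : ℝ) + 1) * 3 ^ l = 2 * m + 1 := by exact_mod_cast hm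
  refine ⟨k + l, m, ?_⟩
  obtain ⟨k, rfl⟩ := Nat.exists_eq_add_of_le' hk
  rw [← mul_sub, hR, ← hmR, Nat.add_sub_cancel, div_pow]
  field_simp
  ring

/-- The functional equation `ν̂(t) = cos(2πt) ν̂(3t/4)` for the Fourier transform of an invariant
measure. -/
lemma fourier_functional_equation (ν : Measure ℝ) [IsProbabilityMeasure ν]
    (hinv : ν = (1 / 2 : ℝ≥0∞) • Measure.map (fun x : ℝ => (3 / 4 : ℝ) * x + 1) ν
              + (1 / 2 : ℝ≥0∞) • Measure.map (fun x : ℝ => (3 / 4 : ℝ) * x - 1) ν) (t : ℝ) :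
    ∫ x : ℝ, Complex.exp (2 * Real.pi * Complex.I * t * x) ∂ν =
      Complex.cos (2 * Real.pi * t) *
        ∫ x : ℝ, Complex.exp (2 * Real.pi * Complex.I * (3 / 4 * t : ℝ) * x) ∂ν := by
  have hint : ∀ (μ : Measure ℝ) [IsFiniteMeasure μ],
      Integrable (fun x : ℝ => Complex.exp (2 * Real.pi * Complex.I * t * x)) μ := by
    intro μ _
    refine Integrable.of_bound (C := 1) (by fun_prop) (ae_of_all _ fun x => ?_)
    have h : (2 * Real.pi * Complex.I * t * x : ℂ) = ((2 * Real.pi * t * x : ℝ) : ℂ) * Complex.I := by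
      push_cast
      ring
    rw [h, Complex.norm_exp_ofReal_mul_I]
  have hmap : ∀ s : ℝ, ∫ x : ℝ, Complex.exp (2 * Real.pi * Complex.I * t * x)
        ∂(Measure.map (fun x : ℝ => (3 / 4 : ℝ) * x + s) ν) =
      Complex.exp (2 * Real.pi * t * s * Complex.I) *
        ∫ x : ℝ, Complex.exp (2 * Real.pi * Complex.I * (3 / 4 * t : ℝ) * x) ∂ν := by
    intro s
    rw [integral_map (by fun_prop) (by fun_prop), ← integral_const_mul]
    refine integral_congr_ae (ae_of_all _ fun x => ?_)
    simp only
    rw [← Complex.exp_add]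
    congr 1
    push_cast
    ring
  have hplus := hmap 1
  have hminus := hmap (-1)
  simp only [← sub_eq_add_neg] at hminus
  conv_lhs => rw [hinv]
  rw [integral_add_measure ((hint _).smul_measure (by simp)) ((hint _).smul_measure (by simp)),
    integral_smul_measure, integral_smul_measure, hplus, hminus, Complex.cos]
  simp only [one_div, ENNReal.toReal_inv, ENNReal.toReal_ofNat, Complex.real_smul]
  push_cast
  ring_nf

lemma fourier_eq_zero (ν : Measure ℝ) [IsProbabilityMeasure ν]
    (hinv : ν = (1 / 2 : ℝ≥0∞) • Measure.map (fun x : ℝ => (3 / 4 : ℝ) * x + 1) ν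
              + (1 / 2 : ℝ≥0∞) • Measure.map (fun x : ℝ => (3 / 4 : ℝ) * x - 1) ν)
    {t : ℝ} (ht : t ∈ OsetThreeFourths) :
    ∫ x : ℝ, Complex.exp (2 * Real.pi * Complex.I * t * x) ∂ν = 0 := by
  obtain ⟨n, m, rfl⟩ := ht
  induction n with
  | zero =>
    rw [fourier_functional_equation ν hinv]
    refine mul_eq_zero_of_left (Complex.cos_eq_zero_iff.mpr ⟨m, ?_⟩) _
    push_cast
    ring
  | succ n ih =>
    rw [fourier_functional_equation ν hinv]
    have h : (3 / 4 : ℝ) * (1 / 4 * (4 / 3) ^ (n + 1) * (2 * m + 1)) =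
        1 / 4 * (4 / 3) ^ n * (2 * m + 1) := by
      ring
    rw [h, ih, mul_zero]

/-- For each `k ≥ 1` and distinct `γ, γ' ∈ Γ_k`, the difference `γ − γ'` lies in `𝒪`;
hence `{e_γ : γ ∈ Γ_k}` is a mutually orthogonal family of exponentials with respect to
the Bernoulli convolution measure `ν_{3/4}`. -/
theorem gamSet_orthogonal_family
    (ν : Measure ℝ) [IsProbabilityMeasure ν]
    (hatom : ∀ x : ℝ, ν {x} = 0)
    (hinv : ν = (1 / 2 : ℝ≥0∞) • Measure.map (fun x : ℝ => (3 / 4 : ℝ) * x + 1) ν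
              + (1 / 2 : ℝ≥0∞) • Measure.map (fun x : ℝ => (3 / 4 : ℝ) * x - 1) ν)
    (k : ℕ) (hk : 1 ≤ k) :
    (∀ γ ∈ GamSet k, ∀ γ' ∈ GamSet k, γ ≠ γ' → γ - γ' ∈ OsetThreeFourths) ∧
    (∀ γ ∈ GamSet k, ∀ γ' ∈ GamSet k, γ ≠ γ' →
      (∫ x : ℝ, Complex.exp (2 * Real.pi * Complex.I * γ * x)
        * (starRingEnd ℂ) (Complex.exp (2 * Real.pi * Complex.I * γ' * x)) ∂ν) = 0) := by
  refine ⟨fun γ hγ γ' hγ' hne => gamSet_sub_mem hk hγ hγ' hne, fun γ hγ γ' hγ' hne => ?_⟩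
  rw [← fourier_eq_zero ν hinv (gamSet_sub_mem hk hγ hγ' hne)]
  refine integral_congr_ae (ae_of_all _ fun x => ?_)
  simp only
  rw [← Complex.exp_conj, ← Complex.exp_add]
  congr 1
  simp only [map_mul, Complex.conj_I, Complex.conj_ofReal, map_ofNat]
  push_cast
  ring
end

section
/- Let Γ₁ = { (1/3) · Σ_{j=0}^{p} a_j 4^j : p ∈ ℕ, each a_j ∈ {0,1} } ∪ {0}. Then for every t ∈ ℝ there exists γ ∈ Γ₁ such that the infinite product ∏_{n=0}^{∞} cos(2π(3/4)ⁿ(t − γ)) is nonzero; consequently the function t ↦ Σ_{γ ∈ Γ₁} [∏_{n=0}^{∞} cos(2π(3/4)ⁿ(t − γ))]² is strictly positive on all of ℝ. -/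
/-!
The factor with index `n` vanishes at `s` exactly when `4 · 3ⁿ · s = 4ⁿ · (odd integer)`
(`cosFactor_eq_zero_iff`), and the infinite product is nonzero as soon as all factors are
(`prod_limit_ne_zero`), since the arguments tend to zero geometrically.

*Nonvanishing.* Suppose the product vanishes at `t` and at `t - 1/3`. Comparing powers of `2` and
`3` shows that `3 t` is then an integer `M`
(`three_mul_int_of_zeros`). For an integer `M`, subtracting base-four digits `0` or `1` one at a
time leads to a `g` with `g / 3 ∈ Γ₁` such that `M - g` is zero or has odd `2`-adic valuation
(`exists_gamma_of_int`), whereas at a zero of the product the valuation is even.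

*Positivity of the series.* Since a non-summable `tsum` is zero, summability is needed. Differences
of distinct elements of `Γ₁` are `4ᵏ · odd / 3`, hence zeros of a single cosine factor
(`gamOne_sub_zero`): the exponentials with frequencies in `Γ₁` are orthogonal. The partial products
are positive definite functions (`cosProd_posDef`), so Bessel's inequality bounds every finite
partial sum of the series by `1`.
-/

open Filter

/-- The set `Γ₁ = {(1/3) Σ_{j=0}^{p} a_j 4^j : p ∈ ℕ, a_j ∈ {0,1}} ∪ {0}`. -/
def GamOne : Set ℝ :=
  {x : ℝ | ∃ p : ℕ, ∃ a : ℕ → ℕ, (∀ j, a j = 0 ∨ a j = 1) ∧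
    x = (1 / 3 : ℝ) * ∑ j ∈ Finset.range (p + 1), (a j : ℝ) * (4 : ℝ) ^ j} ∪ {0}

/-- The `n`-th factor of the infinite product. -/
noncomputable def cosFactor (n : ℕ) (s : ℝ) : ℝ := Real.cos (2 * Real.pi * (3 / 4 : ℝ) ^ n * s)

/-- The product of the first `N` factors. -/
noncomputable def cosProd (N : ℕ) (s : ℝ) : ℝ := ∏ n ∈ Finset.range N, cosFactor n s

lemma cosFactor_eq_zero_iff (n : ℕ) (s : ℝ) :
    cosFactor n s = 0 ↔ ∃ k : ℤ, 4 * 3 ^ n * s = 4 ^ n * (2 * (k : ℝ) + 1) := by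
  unfold cosFactor
  rw [Real.cos_eq_zero_iff]
  refine exists_congr fun k => ?_
  have hpi := Real.pi_pos
  have h4 : (0 : ℝ) < 4 ^ n := by positivity
  rw [div_pow]
  constructor
  · intro h
    field_simp at h
    linarith
  · intro h
    field_simp
    linarith

/-! ### Nonvanishing of the infinite product -/

/-- The Weierstrass product inequality. -/
lemma one_sub_sum_le_prod (b : ℕ → ℝ) (h0 : ∀ n, 0 ≤ b n) (h1 : ∀ n, b n ≤ 1) (M : ℕ) :
    1 - ∑ n ∈ Finset.range M, b n ≤ ∏ n ∈ Finset.range M, (1 - b n) := by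
  induction M with
  | zero => simp
  | succ M ih =>
    rw [Finset.sum_range_succ, Finset.prod_range_succ]
    have hs : 0 ≤ ∑ n ∈ Finset.range M, b n := Finset.sum_nonneg fun n _ => h0 n
    nlinarith [mul_le_mul_of_nonneg_right ih (sub_nonneg.2 (h1 M)), mul_nonneg hs (h0 M)]

lemma prod_limit_ne_zero {s L : ℝ}
    (hL : Tendsto (fun N : ℕ => ∏ n ∈ Finset.range (N + 1),
      Real.cos (2 * Real.pi * (3 / 4 : ℝ) ^ n * s)) atTop (nhds L))
    (hs : ∀ n, cosFactor n s ≠ 0) : L ≠ 0 := by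
  -- `1 - cos (2π (3/4)ⁿ s) ≤ (2π (3/4)ⁿ s)² / 2`, which is the summable sequence `b`.
  set b : ℕ → ℝ := fun n => (2 * Real.pi * s) ^ 2 / 2 * (9 / 16 : ℝ) ^ n with hb
  have hbsum : Summable b :=
    (summable_geometric_of_lt_one (by norm_num) (by norm_num)).mul_left _
  have hb0 : ∀ n, 0 ≤ b n := fun n => by positivity
  have hcos : ∀ n, 1 - cosFactor n s ≤ b n := by
    intro n
    have h := Real.one_sub_sq_div_two_le_cos (x := 2 * Real.pi * (3 / 4 : ℝ) ^ n * s)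
    have e : (2 * Real.pi * (3 / 4 : ℝ) ^ n * s) ^ 2 / 2 = b n := by
      rw [hb]
      have : (9 / 16 : ℝ) ^ n = ((3 / 4 : ℝ) ^ n) ^ 2 := by
        rw [← pow_mul, mul_comm n 2, pow_mul]; norm_num
      simp only [this]; ring
    unfold cosFactor
    linarith
  obtain ⟨K, hK⟩ : ∃ K, ∑' n, b (n + K) < 1 / 2 :=
    ((tendsto_sum_nat_add b).eventually (gt_mem_nhds (by norm_num : (0 : ℝ) < 1 / 2))).exists
  have htail : ∀ M, 1 / 2 ≤ ∏ n ∈ Finset.range M, cosFactor (K + n) s := by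
    intro M
    have hs' : Summable fun n => b (n + K) := (summable_nat_add_iff K).2 hbsum
    have h1 : ∀ n, b (n + K) ≤ 1 := fun n => by
      have := hs'.le_tsum n (fun j _ => hb0 _)
      linarith
    have h2 : ∑ n ∈ Finset.range M, b (n + K) ≤ 1 / 2 :=
      (hs'.sum_le_tsum _ (fun j _ => hb0 _)).trans hK.le
    have h3 : 1 - ∑ n ∈ Finset.range M, b (n + K)
        ≤ ∏ n ∈ Finset.range M, (1 - b (n + K)) :=
      one_sub_sum_le_prod (fun n => b (n + K)) (fun n => hb0 _) h1 M
    have h4 : ∏ n ∈ Finset.range M, (1 - b (n + K))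
        ≤ ∏ n ∈ Finset.range M, cosFactor (K + n) s := by
      refine Finset.prod_le_prod (fun n _ => by linarith [h1 n]) (fun n _ => ?_)
      have := hcos (K + n)
      rw [add_comm K n] at this ⊢
      linarith
    linarith
  have hKpos : 0 < |cosProd K s| := abs_pos.2 (Finset.prod_ne_zero_iff.2 fun n _ => hs n)
  have hbound : ∀ᶠ N : ℕ in atTop, |cosProd K s| * (1 / 2) ≤ |∏ n ∈ Finset.range (N + 1),
      Real.cos (2 * Real.pi * (3 / 4 : ℝ) ^ n * s)| := by
    filter_upwards [eventually_ge_atTop K] with N hN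
    obtain ⟨M, hM⟩ := Nat.exists_eq_add_of_le (show K ≤ N + 1 by omega)
    rw [hM, Finset.prod_range_add, abs_mul]
    exact mul_le_mul_of_nonneg_left ((htail M).trans (le_abs_self _)) (abs_nonneg _)
  have := ge_of_tendsto hL.abs hbound
  intro h0
  rw [h0, abs_zero] at this
  linarith

/-! ### Arithmetic of `Γ₁` -/

lemma zero_mem_gamOne : (0 : ℝ) ∈ GamOne := Or.inr rfl

/-- Appending a lowest base-four digit `d ∈ {0, 1}`. -/
lemma gamOne_append {x : ℝ} (hx : x ∈ GamOne) {d : ℕ} (hd : d = 0 ∨ d = 1) :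
    4 * x + d / 3 ∈ GamOne := by
  have key : ∀ (p : ℕ) (a : ℕ → ℕ), (∀ j, a j = 0 ∨ a j = 1) →
      x = (1 / 3 : ℝ) * ∑ j ∈ Finset.range (p + 1), (a j : ℝ) * (4 : ℝ) ^ j →
      4 * x + d / 3 ∈ GamOne := by
    intro p a ha hx
    refine Or.inl ⟨p + 1, fun j => Nat.casesOn j d a, ?_, ?_⟩
    · rintro (_ | j)
      · exact hd
      · exact ha j
    · rw [Finset.sum_range_succ', hx]
      simp only [pow_succ, ← mul_assoc, ← Finset.sum_mul]
      simp
      ring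
  rcases hx with ⟨p, a, ha, hx⟩ | hx
  · exact key p a ha hx
  · exact key 0 (fun _ => 0) (fun _ => Or.inl rfl) (by rw [hx]; simp)

/-- Digit subtraction: an integer `M` minus a suitable sum of distinct powers of four is zero or
has odd `2`-adic valuation. -/
lemma exists_gamma_of_int (M : ℤ) : ∃ γ ∈ GamOne,
    (M : ℝ) / 3 - γ = 0 ∨ ∃ (k : ℕ) (m : ℤ), (M : ℝ) / 3 - γ = 4 ^ k * (4 * (m : ℝ) + 2) / 3 := by
  induction h : M.natAbs using Nat.strong_induction_on generalizing M with
  | _ N ih =>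
    -- When `M = 4 q + d`, a witness for `q` gives one for `M`.
    have step : ∀ (q : ℤ) (d : ℕ), (d = 0 ∨ d = 1) → M = 4 * q + d → q.natAbs < N →
        ∃ γ ∈ GamOne, (M : ℝ) / 3 - γ = 0 ∨
          ∃ (k : ℕ) (m : ℤ), (M : ℝ) / 3 - γ = 4 ^ k * (4 * (m : ℝ) + 2) / 3 := by
      intro q d hd hM hq
      obtain ⟨γ, hγ, hor⟩ := ih _ hq q rfl
      refine ⟨4 * γ + d / 3, gamOne_append hγ hd, ?_⟩
      have hM' : (M : ℝ) = 4 * q + d := by rw [hM]; push_cast; ring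
      have e : (M : ℝ) / 3 - (4 * γ + d / 3) = 4 * ((q : ℝ) / 3 - γ) := by rw [hM']; ring
      rw [e]
      rcases hor with h0 | ⟨k, m, hkm⟩
      · left; rw [h0, mul_zero]
      · right; exact ⟨k + 1, m, by rw [hkm, pow_succ]; ring⟩
    have h13 : (1 : ℝ) / 3 ∈ GamOne := by
      simpa using gamOne_append zero_mem_gamOne (d := 1) (Or.inr rfl)
    by_cases hM0 : M = 0
    · exact ⟨0, zero_mem_gamOne, Or.inl (by simp [hM0])⟩
    obtain ⟨q, hq⟩ : ∃ q : ℤ, M = 4 * q ∨ M = 4 * q + 1 ∨ M = 4 * q + 2 ∨ M = 4 * q + 3 :=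
      ⟨M / 4, by omega⟩
    rcases hq with hq | hq | hq | hq
    · exact step q 0 (Or.inl rfl) (by simpa using hq) (by omega)
    · by_cases hq0 : q = 0
      · exact ⟨1 / 3, h13, Or.inl (by rw [hq, hq0]; norm_num)⟩
      · exact step q 1 (Or.inr rfl) (by simpa using hq) (by omega)
    · exact ⟨0, zero_mem_gamOne, Or.inr ⟨0, q, by rw [hq]; push_cast; ring⟩⟩
    · exact ⟨1 / 3, h13, Or.inr ⟨0, q, by rw [hq]; push_cast; ring⟩⟩

lemma four_pow_mul_ne (a b : ℕ) (m v : ℤ) (hv : Odd v) :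
    (4 : ℤ) ^ a * (4 * m + 2) ≠ 4 ^ b * v := by
  intro h
  have h4 : ∀ n : ℕ, (4 : ℤ) ^ n ≠ 0 := fun n => by positivity
  obtain ⟨w, rfl⟩ := hv
  rcases le_or_gt b a with hab | hab
  · obtain ⟨c, rfl⟩ := Nat.exists_eq_add_of_le hab
    rw [pow_add, mul_assoc] at h
    have h' := mul_left_cancel₀ (h4 b) h
    have : (4 : ℤ) ^ c * (4 * m + 2) = 2 * (4 ^ c * (2 * m + 1)) := by ring
    omega
  · obtain ⟨c, rfl⟩ := Nat.exists_eq_add_of_lt hab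
    rw [add_assoc, pow_add, mul_assoc] at h
    have h' := mul_left_cancel₀ (h4 a) h
    have : (4 : ℤ) ^ (c + 1) * (2 * w + 1) = 4 * (4 ^ c * (2 * w + 1)) := by ring
    omega

/-- Numbers of the shape produced by `exists_gamma_of_int` are not zeros of any factor. -/
lemma cosFactor_ne_zero_of_shape {s : ℝ}
    (hs : s = 0 ∨ ∃ (k : ℕ) (m : ℤ), s = 4 ^ k * (4 * (m : ℝ) + 2) / 3) (n : ℕ) :
    cosFactor n s ≠ 0 := by
  intro h
  obtain ⟨v, hv⟩ := (cosFactor_eq_zero_iff n s).1 h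
  rcases hs with rfl | ⟨k, m, rfl⟩
  · rw [mul_zero] at hv
    have h' : (4 : ℤ) ^ n * (2 * v + 1) = 0 := by exact_mod_cast hv.symm
    have h4 : (4 : ℤ) ^ n ≠ 0 := by positivity
    rcases mul_eq_zero.1 h' with h' | h'
    · exact h4 h'
    · omega
  · have h3 : Odd ((3 : ℤ) ^ n) := Odd.pow (by decide)
    obtain ⟨z, hz⟩ := h3
    have hz' : (3 : ℝ) ^ n = 2 * z + 1 := by exact_mod_cast hz
    refine four_pow_mul_ne (k + 1) n (m * (2 * z + 1) + z) (3 * (2 * v + 1)) ?_ ?_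
    · exact ⟨3 * v + 1, by ring⟩
    · have : (4 : ℝ) ^ (k + 1) * (4 * (m * (2 * z + 1) + z) + 2) = 4 ^ n * (3 * (2 * v + 1)) := by
        rw [hz'] at hv
        linear_combination 3 * hv
      exact_mod_cast this

/-- If both `t` and `t - 1/3` are zeros of the product, then `3 t` is an integer. -/
lemma three_mul_int_of_zeros {t : ℝ} {n m : ℕ} (hn : cosFactor n t = 0)
    (hm : cosFactor m (t - 1 / 3) = 0) : ∃ M : ℤ, t = (M : ℝ) / 3 := by
  obtain ⟨u, hu⟩ := (cosFactor_eq_zero_iff _ _).1 hn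
  obtain ⟨v, hv⟩ := (cosFactor_eq_zero_iff _ _).1 hm
  by_cases hn1 : n = 1
  · subst hn1
    exact ⟨2 * u + 1, by push_cast; linarith⟩
  by_cases hm1 : m = 1
  · subst hm1
    exact ⟨2 * v + 2, by push_cast; linarith⟩
  exfalso
  -- Eliminating `t` leaves an identity between integers.
  have key : (3 : ℤ) * 3 ^ m * (4 ^ n * (2 * u + 1)) - 4 * 3 ^ m * 3 ^ n
      = 3 * 3 ^ n * (4 ^ m * (2 * v + 1)) := by
    have : (3 : ℝ) * 3 ^ m * (4 ^ n * (2 * u + 1)) - 4 * 3 ^ m * 3 ^ n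
      = 3 * 3 ^ n * (4 ^ m * (2 * v + 1)) := by
      linear_combination 3 * 3 ^ n * hv - 3 * 3 ^ m * hu
    exact_mod_cast this
  obtain ⟨x, hx⟩ : Odd ((3 : ℤ) ^ m) := Odd.pow (by decide)
  obtain ⟨y, hy⟩ : Odd ((3 : ℤ) ^ n) := Odd.pow (by decide)
  rcases n with _ | _ | n
  · rcases m with _ | m
    · norm_num at key
      omega
    · -- The left side is odd and the right side is even.
      rw [hx] at key
      have e1 : (3 : ℤ) * (2 * x + 1) * (4 ^ 0 * (2 * u + 1)) - 4 * (2 * x + 1) * 3 ^ 0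
          = 2 * (6 * x * u + 3 * x + 3 * u - 4 * x - 1) + 1 := by ring
      have e2 : (3 : ℤ) * 3 ^ 0 * (4 ^ (m + 1) * (2 * v + 1))
          = 2 * (6 * 4 ^ m * (2 * v + 1)) := by ring
      omega
  · exact hn1 rfl
  · rcases m with _ | _ | m
    · -- The left side is even and the right side is odd.
      rw [hy] at key
      have e1 : (3 : ℤ) * 3 ^ 0 * (4 ^ (n + 1 + 1) * (2 * u + 1)) - 4 * 3 ^ 0 * (2 * y + 1)
          = 2 * (24 * 4 ^ n * (2 * u + 1) - 2 * (2 * y + 1)) := by ring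
      have e2 : (3 : ℤ) * (2 * y + 1) * (4 ^ 0 * (2 * v + 1))
          = 2 * (6 * y * v + 3 * y + 3 * v + 1) + 1 := by ring
      omega
    · exact hm1 rfl
    · -- Modulo `16`, only the term `4 · 3 ^ m · 3 ^ n` survives.
      rw [hx, hy] at key
      have e1 : (3 : ℤ) * (2 * x + 1) * (4 ^ (n + 1 + 1) * (2 * u + 1))
            - 4 * (2 * x + 1) * (2 * y + 1)
          = 16 * (3 * (2 * x + 1) * (4 ^ n * (2 * u + 1))) - 8 * (2 * x * y + x + y) - 4 := by
        ring
      have e2 : (3 : ℤ) * (2 * y + 1) * (4 ^ (m + 1 + 1) * (2 * v + 1))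
          = 16 * (3 * (2 * y + 1) * (4 ^ m * (2 * v + 1))) := by ring
      omega

/-! ### Orthogonality and Bessel's inequality -/

lemma digit_sum_sub (N : ℕ) (a b : ℕ → ℕ) (ha : ∀ j, a j = 0 ∨ a j = 1)
    (hb : ∀ j, b j = 0 ∨ b j = 1) :
    (∑ j ∈ Finset.range N, (a j : ℝ) * 4 ^ j = ∑ j ∈ Finset.range N, (b j : ℝ) * 4 ^ j) ∨
    ∃ (k : ℕ) (m : ℤ), ∑ j ∈ Finset.range N, (a j : ℝ) * 4 ^ j
      - ∑ j ∈ Finset.range N, (b j : ℝ) * 4 ^ j = 4 ^ k * (2 * (m : ℝ) + 1) := by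
  induction N generalizing a b with
  | zero => left; simp
  | succ N ih =>
    have e : ∀ c : ℕ → ℕ, ∑ j ∈ Finset.range (N + 1), (c j : ℝ) * 4 ^ j
        = 4 * ∑ j ∈ Finset.range N, (c (j + 1) : ℝ) * 4 ^ j + c 0 := by
      intro c
      rw [Finset.sum_range_succ', Finset.mul_sum]
      simp only [pow_zero, mul_one, pow_succ]
      congr 1
      exact Finset.sum_congr rfl fun j _ => by ring
    rw [e a, e b]
    set A := ∑ j ∈ Finset.range N, (a (j + 1) : ℝ) * 4 ^ j with hA
    set B := ∑ j ∈ Finset.range N, (b (j + 1) : ℝ) * 4 ^ j with hB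
    have hAi : A = ((∑ j ∈ Finset.range N, (a (j + 1) : ℤ) * 4 ^ j : ℤ) : ℝ) := by
      rw [hA]; push_cast; rfl
    have hBi : B = ((∑ j ∈ Finset.range N, (b (j + 1) : ℤ) * 4 ^ j : ℤ) : ℝ) := by
      rw [hB]; push_cast; rfl
    by_cases h0 : a 0 = b 0
    · rw [h0]
      rcases ih (fun j => a (j + 1)) (fun j => b (j + 1)) (fun j => ha _) (fun j => hb _)
        with h | ⟨k, m, h⟩
      · left; rw [hA, hB, h]
      · right
        refine ⟨k + 1, m, ?_⟩
        have h' : A - B = 4 ^ k * (2 * (m : ℝ) + 1) := h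
        rw [pow_succ]
        linear_combination 4 * h'
    · right
      rcases ha 0 with h1 | h1 <;> rcases hb 0 with h2 | h2
      · omega
      · refine ⟨0, 2 * (∑ j ∈ Finset.range N, (a (j + 1) : ℤ) * 4 ^ j
          - ∑ j ∈ Finset.range N, (b (j + 1) : ℤ) * 4 ^ j) - 1, ?_⟩
        rw [Int.cast_sub, Int.cast_mul, Int.cast_sub, ← hAi, ← hBi, h1, h2]
        push_cast
        ring
      · refine ⟨0, 2 * (∑ j ∈ Finset.range N, (a (j + 1) : ℤ) * 4 ^ j
          - ∑ j ∈ Finset.range N, (b (j + 1) : ℤ) * 4 ^ j), ?_⟩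
        rw [Int.cast_mul, Int.cast_sub, ← hAi, ← hBi, h1, h2]
        push_cast
        ring
      · omega

/-- The digit sequence of an element of `Γ₁` can be padded by zeros to any larger length. -/
lemma gamOne_digits {x : ℝ} (hx : x ∈ GamOne) : ∃ (p : ℕ) (a : ℕ → ℕ),
    (∀ j, a j = 0 ∨ a j = 1) ∧
      ∀ N, p ≤ N → x = (1 / 3 : ℝ) * ∑ j ∈ Finset.range N, (a j : ℝ) * 4 ^ j := by
  rcases hx with ⟨p, a, ha, hx⟩ | hx
  · refine ⟨p + 1, fun j => if j < p + 1 then a j else 0, fun j => ?_, fun N hN => ?_⟩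
    · dsimp only
      split_ifs
      · exact ha j
      · exact Or.inl rfl
    · rw [hx]
      congr 1
      rw [← Finset.sum_subset (Finset.range_mono hN)]
      · refine Finset.sum_congr rfl fun j hj => ?_
        beta_reduce
        rw [if_pos (Finset.mem_range.1 hj)]
      · intro j _ hj
        beta_reduce
        rw [if_neg fun h => hj (Finset.mem_range.2 h), Nat.cast_zero, zero_mul]
  · exact ⟨0, fun _ => 0, fun _ => Or.inl rfl, fun N _ => by rw [hx]; simp⟩

/-- Orthogonality: some cosine factor vanishes at the difference of distinct elements of `Γ₁`. -/
lemma gamOne_sub_zero {x y : ℝ} (hx : x ∈ GamOne) (hy : y ∈ GamOne) (hxy : x ≠ y) :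
    ∃ n, cosFactor n (x - y) = 0 := by
  obtain ⟨p, a, ha, hxa⟩ := gamOne_digits hx
  obtain ⟨q, b, hb, hyb⟩ := gamOne_digits hy
  have hx' := hxa (max p q) (le_max_left _ _)
  have hy' := hyb (max p q) (le_max_right _ _)
  rcases digit_sum_sub (max p q) a b ha hb with h | ⟨k, m, h⟩
  · exact absurd (by rw [hx', hy', h]) hxy
  · -- `4ᵏ · odd / 3 = 4ᵏ · (3ᵏ · odd) / 3ᵏ⁺¹`, a zero of the factor with index `k + 1`.
    refine ⟨k + 1, (cosFactor_eq_zero_iff _ _).2 ?_⟩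
    obtain ⟨z, hz⟩ : Odd ((3 : ℤ) ^ k) := Odd.pow (by decide)
    have hz' : (3 : ℝ) ^ k = 2 * z + 1 := by exact_mod_cast hz
    refine ⟨m * (2 * z + 1) + z, ?_⟩
    rw [hx', hy', ← mul_sub, h, pow_succ, pow_succ, hz']
    push_cast
    ring

/-- The partial products are positive definite functions. In the inductive step, the addition
formula splits the quadratic form of `cosProd (N + 1)` into two quadratic forms of `cosProd N`. -/
lemma cosProd_posDef {ι : Type*} (F : Finset ι) (x : ι → ℝ) (N : ℕ) (c : ι → ℝ) :
    0 ≤ ∑ i ∈ F, ∑ j ∈ F, c i * c j * cosProd N (x i - x j) := by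
  induction N generalizing c with
  | zero =>
    have : ∑ i ∈ F, ∑ j ∈ F, c i * c j * cosProd 0 (x i - x j) = (∑ i ∈ F, c i) ^ 2 := by
      simp [cosProd, sq, Finset.sum_mul_sum]
    rw [this]
    positivity
  | succ N ih =>
    set w : ℝ := 2 * Real.pi * (3 / 4 : ℝ) ^ N with hw
    have h := add_nonneg (ih fun i => c i * Real.cos (w * x i)) (ih fun i => c i * Real.sin (w * x i))
    refine h.trans_eq ?_
    simp only [← Finset.sum_add_distrib]
    refine Finset.sum_congr rfl fun i _ => Finset.sum_congr rfl fun j _ => ?_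
    have e : cosProd (N + 1) (x i - x j) = cosProd N (x i - x j) *
        (Real.cos (w * x i) * Real.cos (w * x j) + Real.sin (w * x i) * Real.sin (w * x j)) := by
      rw [cosProd, Finset.prod_range_succ, ← Real.cos_sub, ← mul_sub]
      rfl
    rw [e]
    ring

lemma cosProd_zero (N : ℕ) : cosProd N 0 = 1 := by simp [cosProd, cosFactor]

lemma cosProd_neg (N : ℕ) (s : ℝ) : cosProd N (-s) = cosProd N s := by
  simp [cosProd, cosFactor]

/-- Bessel's inequality for a positive definite partial product. -/
lemma cosProd_bessel (F : Finset GamOne) (N : ℕ) (t : ℝ)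
    (horth : ∀ x ∈ F, ∀ y ∈ F, x ≠ y → cosProd N ((x : ℝ) - y) = 0) :
    ∑ x ∈ F, cosProd N (t - x) ^ 2 ≤ 1 := by
  -- The index `none` stands for the frequency `t`; the coefficients are those of the
  -- residual of the orthogonal projection.
  have h := cosProd_posDef (Finset.insertNone F) (fun o => o.elim t fun x => (x : ℝ)) N
    (fun o => o.elim 1 fun x => -cosProd N (t - x))
  simp only [Finset.sum_insertNone, Option.elim, sub_self, cosProd_zero] at h
  have e1 : ∀ x ∈ F, ∑ y ∈ F, -cosProd N (t - x) * -cosProd N (t - y) * cosProd N ((x : ℝ) - y)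
      = cosProd N (t - x) ^ 2 := by
    intro x hx
    rw [Finset.sum_eq_single_of_mem x hx]
    · rw [sub_self, cosProd_zero]; ring
    · intro y hy hyx
      rw [horth x hx y hy hyx.symm, mul_zero]
  have e2 : ∀ x : GamOne, cosProd N ((x : ℝ) - t) = cosProd N (t - x) := fun x => by
    rw [← cosProd_neg, neg_sub]
  rw [Finset.sum_add_distrib, Finset.sum_congr rfl e1] at h
  simp only [e2] at h
  have e3 : ∑ x ∈ F, 1 * -cosProd N (t - x) * cosProd N (t - x)
      = -∑ x ∈ F, cosProd N (t - x) ^ 2 := by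
    rw [← Finset.sum_neg_distrib]
    exact Finset.sum_congr rfl fun x _ => by ring
  have e4 : ∑ x ∈ F, -cosProd N (t - x) * 1 * cosProd N (t - x)
      = -∑ x ∈ F, cosProd N (t - x) ^ 2 := by
    rw [← Finset.sum_neg_distrib]
    exact Finset.sum_congr rfl fun x _ => by ring
  rw [e3, e4] at h
  linarith

lemma cosProd_orthogonal (F : Finset GamOne) : ∀ᶠ N in atTop,
    ∀ x ∈ F, ∀ y ∈ F, x ≠ y → cosProd N ((x : ℝ) - y) = 0 := by
  simp only [Filter.eventually_all_finset]
  intro x _ y _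
  by_cases hxy : x = y
  · exact Eventually.of_forall fun N h => absurd hxy h
  obtain ⟨n, hn⟩ := gamOne_sub_zero x.2 y.2 fun h => hxy (Subtype.ext h)
  filter_upwards [eventually_gt_atTop n] with N hN _
  exact Finset.prod_eq_zero (Finset.mem_range.2 hN) hn

/-- Let `S s` denote the value of the infinite product `∏_{n=0}^{∞} cos(2π(3/4)ⁿ s)`
(the limit of its partial products).  Then for every `t ∈ ℝ` there is `γ ∈ Γ₁` with
`S (t − γ) ≠ 0`; consequently `t ↦ Σ_{γ ∈ Γ₁} S(t − γ)²` is strictly positive on `ℝ`. -/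
theorem gamOne_sum_strictly_positive
    (S : ℝ → ℝ)
    (hS : ∀ s : ℝ, Tendsto (fun N : ℕ => ∏ n ∈ Finset.range (N + 1),
      Real.cos (2 * Real.pi * (3 / 4 : ℝ) ^ n * s)) atTop (nhds (S s))) :
    ∀ t : ℝ, (∃ γ ∈ GamOne, S (t - γ) ≠ 0) ∧
      0 < ∑' γ : GamOne, (S (t - (γ : ℝ))) ^ 2 := by
  intro t
  have hex : ∃ γ ∈ GamOne, S (t - γ) ≠ 0 := by
    by_contra! hall
    have hzero : ∀ γ ∈ GamOne, ∃ n, cosFactor n (t - γ) = 0 := by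
      intro γ hγ
      by_contra! hne
      exact prod_limit_ne_zero (hS (t - γ)) hne (hall γ hγ)
    obtain ⟨n, hn⟩ := hzero 0 zero_mem_gamOne
    obtain ⟨m, hm⟩ := hzero (1 / 3) (by
      simpa using gamOne_append zero_mem_gamOne (d := 1) (Or.inr rfl))
    rw [sub_zero] at hn
    obtain ⟨M, rfl⟩ := three_mul_int_of_zeros hn hm
    obtain ⟨γ, hγ, hshape⟩ := exists_gamma_of_int M
    obtain ⟨k, hk⟩ := hzero γ hγ
    exact cosFactor_ne_zero_of_shape hshape k hk
  refine ⟨hex, ?_⟩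
  have hsum : Summable fun γ : GamOne => (S (t - (γ : ℝ))) ^ 2 := by
    refine summable_of_sum_le (c := 1) (fun γ => sq_nonneg _) fun F => ?_
    have hlim : Tendsto (fun N : ℕ => ∑ x ∈ F, cosProd (N + 1) (t - x) ^ 2) atTop
        (nhds (∑ x ∈ F, S (t - (x : ℝ)) ^ 2)) :=
      tendsto_finsetSum _ fun x _ => (hS (t - x)).pow 2
    refine le_of_tendsto hlim ?_
    filter_upwards [(tendsto_add_atTop_nat 1).eventually (cosProd_orthogonal F)] with N hN
    exact cosProd_bessel F (N + 1) t hN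
  obtain ⟨γ, hγ, hne⟩ := hex
  exact hsum.tsum_pos (fun γ => sq_nonneg _) ⟨γ, hγ⟩ (by positivity)
end

section
/- Let a, b be coprime positive integers with a < b, let λ = a/b, and let ν be a Borel probability measure on ℝ with no atoms satisfying ν = (1/2)(ν ∘ τ₊⁻¹) + (1/2)(ν ∘ τ₋⁻¹) for τ₊(x) = λx + 1, τ₋(x) = λx − 1. For γ, γ' ∈ ℝ, the exponentials e_γ and e_{γ'} are orthogonal in L²(ν) if and only if γ − γ' ∈ 𝒪_{a,b} = { (1/4)(b/a)ⁿ(2k+1) : n ∈ ℕ₀, k ∈ ℤ }. -/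
/-!
The inner product of `e_γ` and `e_{γ'}` is the characteristic function `φ` of `ν` at
`2π(γ - γ')`. Hutchinson invariance turns into the functional equation
`φ(t) = cos t · φ(λt)` (`charFun_eq_cos_mul`), which iterates to
`φ(t) = ∏_{k<n} cos(λᵏ t) · φ(λⁿ t)`. Since `φ` is continuous with `φ(0) = 1` and `0 ≤ λ < 1`,
the last factor is nonzero for large `n`, so `φ(t) = 0` exactly when some `cos(λᵏ t)` vanishes,
that is, when `λᵏ t` is an odd multiple of `π/2`. For `t = 2πx` and `λ = a/b` this says
`x = (1/4)(b/a)ᵏ(2m+1)`.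
-/

open MeasureTheory
open scoped ENNReal

/-- The set `𝒪_{a,b} = {(1/4)(b/a)ⁿ(2k+1) : n ∈ ℕ₀, k ∈ ℤ}`. -/
def OsetAB (a b : ℕ) : Set ℝ :=
  {x : ℝ | ∃ (n : ℕ) (k : ℤ), x = (1 / 4) * ((b : ℝ) / (a : ℝ)) ^ n * (2 * (k : ℝ) + 1)}

/-- The characteristic function of an affine image of `ν`. -/
lemma charFun_map_affine (ν : Measure ℝ) (l c t : ℝ) :
    charFun (Measure.map (fun x : ℝ => l * x + c) ν) t
      = Complex.exp (c * t * Complex.I) * charFun ν (l * t) := by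
  rw [charFun_apply_real, charFun_apply_real,
    integral_map (by fun_prop) (by fun_prop), ← integral_const_mul]
  congr 1
  ext x
  rw [← Complex.exp_add]
  congr 1
  push_cast
  ring

lemma charFun_eq_cos_mul (ν : Measure ℝ) [IsProbabilityMeasure ν] (l : ℝ)
    (hinv : ν = (1 / 2 : ℝ≥0∞) • Measure.map (fun x : ℝ => l * x + 1) ν
              + (1 / 2 : ℝ≥0∞) • Measure.map (fun x : ℝ => l * x - 1) ν) (t : ℝ) :
    charFun ν t = (Real.cos t : ℂ) * charFun ν (l * t) := by
  have hp := charFun_map_affine ν l 1 t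
  have hm := charFun_map_affine ν l (-1) t
  simp only [← sub_eq_add_neg] at hm
  have hint : ∀ c : ℝ, Integrable (fun x : ℝ => Complex.exp (t * x * Complex.I))
      ((1 / 2 : ℝ≥0∞) • Measure.map (fun x : ℝ => l * x + c) ν) := by
    intro c
    have : IsProbabilityMeasure (Measure.map (fun x : ℝ => l * x + c) ν) :=
      Measure.isProbabilityMeasure_map (by fun_prop)
    refine Integrable.smul_measure ?_ (by simp)
    refine Integrable.of_bound (by fun_prop) 1 (Filter.Eventually.of_forall fun x => ?_)
    rw [← Complex.ofReal_mul, Complex.norm_exp_ofReal_mul_I]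
  have hint' := hint (-1)
  simp only [← sub_eq_add_neg] at hint'
  have h : charFun ν t
      = (1 / 2 : ℂ) * charFun (Measure.map (fun x : ℝ => l * x + 1) ν) t
        + (1 / 2 : ℂ) * charFun (Measure.map (fun x : ℝ => l * x - 1) ν) t := by
    conv_lhs => rw [hinv]
    simp only [charFun_apply_real]
    rw [integral_add_measure (hint 1) hint', integral_smul_measure, integral_smul_measure]
    simp
  rw [h, hp, hm, Complex.ofReal_cos, Complex.cos]
  push_cast
  ring_nf

lemma charFun_eq_zero_iff (ν : Measure ℝ) [IsProbabilityMeasure ν] (l : ℝ)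
    (h0 : 0 ≤ l) (h1 : l < 1)
    (hinv : ν = (1 / 2 : ℝ≥0∞) • Measure.map (fun x : ℝ => l * x + 1) ν
              + (1 / 2 : ℝ≥0∞) • Measure.map (fun x : ℝ => l * x - 1) ν) (t : ℝ) :
    charFun ν t = 0 ↔ ∃ n : ℕ, Real.cos (l ^ n * t) = 0 := by
  have hprod : ∀ n : ℕ, charFun ν t
      = (∏ k ∈ Finset.range n, (Real.cos (l ^ k * t) : ℂ)) * charFun ν (l ^ n * t) := by
    intro n
    induction n with
    | zero => simp
    | succ n ih =>
      rw [ih, Finset.prod_range_succ, charFun_eq_cos_mul ν l hinv (l ^ n * t), pow_succ',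
        mul_assoc l, mul_assoc]
  constructor
  · intro hz
    have hlim : Filter.Tendsto (fun n : ℕ => charFun ν (l ^ n * t)) Filter.atTop
        (nhds 1) := by
      have h2 : Filter.Tendsto (fun n : ℕ => l ^ n * t) Filter.atTop (nhds 0) := by
        simpa using (tendsto_pow_atTop_nhds_zero_of_lt_one h0 h1).mul_const t
      have h3 := (continuous_charFun (μ := ν)).tendsto 0
      rw [charFun_zero] at h3
      simpa [Function.comp_def] using h3.comp h2
    obtain ⟨n, hn⟩ := (hlim.eventually_ne one_ne_zero).exists
    have h4 := hprod n
    rw [hz, eq_comm, mul_eq_zero, or_iff_left hn, Finset.prod_eq_zero_iff] at h4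
    obtain ⟨k, -, hk⟩ := h4
    exact ⟨k, by exact_mod_cast hk⟩
  · rintro ⟨n, hn⟩
    rw [hprod (n + 1), Finset.prod_range_succ, hn]
    simp

/-- Let `a, b` be coprime positive integers with `a < b`, `λ = a/b`, and let `ν` be an
atomless Borel probability measure on `ℝ` satisfying the Hutchinson invariance for
`τ±(x) = λx ± 1`.  For `γ, γ' ∈ ℝ`, the exponentials `e_γ` and `e_{γ'}` are orthogonal
in `L²(ν)` if and only if `γ − γ' ∈ 𝒪_{a,b}`. -/
theorem exponentials_orthogonal_iff_diff_mem_OsetAB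
    (a b : ℕ) (ha : 0 < a) (hab : a < b) (hco : Nat.Coprime a b)
    (ν : Measure ℝ) [IsProbabilityMeasure ν]
    (hatom : ∀ x : ℝ, ν {x} = 0)
    (hinv : ν = (1 / 2 : ℝ≥0∞) • Measure.map (fun x : ℝ => ((a : ℝ) / (b : ℝ)) * x + 1) ν
              + (1 / 2 : ℝ≥0∞) • Measure.map (fun x : ℝ => ((a : ℝ) / (b : ℝ)) * x - 1) ν)
    (γ γ' : ℝ) :
    (∫ x : ℝ, Complex.exp (2 * Real.pi * Complex.I * γ * x)
        * (starRingEnd ℂ) (Complex.exp (2 * Real.pi * Complex.I * γ' * x)) ∂ν) = 0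
      ↔ γ - γ' ∈ OsetAB a b := by
  have ha' : (0 : ℝ) < a := by exact_mod_cast ha
  have hab' : (a : ℝ) < b := by exact_mod_cast hab
  have hb' : (0 : ℝ) < b := ha'.trans hab'
  have hint : (∫ x : ℝ, Complex.exp (2 * Real.pi * Complex.I * γ * x)
      * (starRingEnd ℂ) (Complex.exp (2 * Real.pi * Complex.I * γ' * x)) ∂ν)
      = charFun ν (2 * Real.pi * (γ - γ')) := by
    rw [charFun_apply_real]
    congr 1
    ext x
    rw [← Complex.exp_conj, ← Complex.exp_add]
    congr 1
    simp only [map_mul, Complex.conj_ofReal, Complex.conj_I, map_ofNat]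
    push_cast
    ring
  rw [hint, charFun_eq_zero_iff ν _ (by positivity) ((div_lt_one hb').2 hab') hinv]
  refine exists_congr fun n => ?_
  rw [Real.cos_eq_zero_iff]
  refine exists_congr fun k => ?_
  have hπ := Real.pi_pos
  have hA : (a : ℝ) ^ n ≠ 0 := by positivity
  have hB : (b : ℝ) ^ n ≠ 0 := by positivity
  rw [div_pow, div_pow]
  constructor
  · intro h
    field_simp at h ⊢
    linarith
  · intro h
    rw [h]
    field_simp
    ring
end
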